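/- If ρ is a separable density matrix on ℂ^m ⊗ ℂ^n, then its partial transpose ρ^{T₂} is again a density matrix; in particular ρ^{T₂} is positive semidefinite (the Peres necessary condition for separability: a separable state remains positive under partial transposition). -/

import Mathlib

open scoped ComplexOrder Kronecker

noncomputable section

/-- A density matrix: positive semidefinite with trace one. -/
def IsDensity {ι : Type*} [Fintype ι] (ρ : Matrix ι ι ℂ) : Prop :=
  ρ.PosSemidef ∧ ρ.trace = 1

/-- A separable state: a finite convex combination of tensor products of density
matrices; a non-separable density matrix is entangled. -/
def Separable {m n : ℕ} (ρ : Matrix (Fin m × Fin n) (Fin m × Fin n) ℂ) : Prop :=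
  ∃ (k : ℕ) (lam : Fin k → ℝ) (ρ1 : Fin k → Matrix (Fin m) (Fin m) ℂ)
    (ρ2 : Fin k → Matrix (Fin n) (Fin n) ℂ),
    (∀ i, 0 ≤ lam i) ∧ (∑ i, lam i = 1) ∧
    (∀ i, IsDensity (ρ1 i)) ∧ (∀ i, IsDensity (ρ2 i)) ∧
    ρ = ∑ i, (lam i : ℂ) • (ρ1 i ⊗ₖ ρ2 i)

/-- The partial transpose on the second tensor factor:
`(ρ^{T₂})_{(i,k),(j,l)} = ρ_{(i,l),(j,k)}`. -/
def ptranspose2 {m n : ℕ} (ρ : Matrix (Fin m × Fin n) (Fin m × Fin n) ℂ) :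
    Matrix (Fin m × Fin n) (Fin m × Fin n) ℂ :=
  Matrix.of fun p q => ρ (p.1, q.2) (q.1, p.2)

section IsDensity

open scoped Matrix

variable {ι κ : Type*} [Fintype ι] [Fintype κ]

theorem IsDensity.transpose {ρ : Matrix ι ι ℂ} (hρ : IsDensity ρ) : IsDensity ρᵀ :=
  ⟨hρ.1.transpose, ρ.trace_transpose.trans hρ.2⟩

theorem IsDensity.kronecker {ρ : Matrix ι ι ℂ} {σ : Matrix κ κ ℂ} (hρ : IsDensity ρ)
    (hσ : IsDensity σ) : IsDensity (ρ ⊗ₖ σ) :=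
  ⟨hρ.1.kronecker hσ.1, by rw [Matrix.trace_kronecker, hρ.2, hσ.2, one_mul]⟩

theorem convex_setOf_isDensity : Convex ℝ {ρ : Matrix ι ι ℂ | IsDensity ρ} := by
  intro ρ hρ σ hσ a b ha hb hab
  refine ⟨(hρ.1.smul ha).add (hσ.1.smul hb), ?_⟩
  rw [Matrix.trace_add, Matrix.trace_smul, Matrix.trace_smul, hρ.2, hσ.2, ← add_smul, hab,
    one_smul]

end IsDensity

section PartialTranspose

open scoped Matrix

variable {m n : ℕ}

theorem ptranspose2_smul {R : Type*} [SMul R ℂ] (c : R)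
    (ρ : Matrix (Fin m × Fin n) (Fin m × Fin n) ℂ) :
    ptranspose2 (c • ρ) = c • ptranspose2 ρ :=
  rfl

theorem ptranspose2_sum {κ : Type*} (s : Finset κ)
    (ρ : κ → Matrix (Fin m × Fin n) (Fin m × Fin n) ℂ) :
    ptranspose2 (∑ i ∈ s, ρ i) = ∑ i ∈ s, ptranspose2 (ρ i) := by
  ext p q
  simp only [ptranspose2, Matrix.of_apply, Matrix.sum_apply]

theorem ptranspose2_kronecker (A : Matrix (Fin m) (Fin m) ℂ) (B : Matrix (Fin n) (Fin n) ℂ) :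
    ptranspose2 (A ⊗ₖ B) = A ⊗ₖ Bᵀ :=
  rfl

theorem Separable.isDensity {ρ : Matrix (Fin m × Fin n) (Fin m × Fin n) ℂ}
    (hρ : Separable ρ) : IsDensity ρ := by
  obtain ⟨k, lam, ρ1, ρ2, hlam, hsum, h1, h2, rfl⟩ := hρ
  simp only [Complex.coe_smul]
  exact convex_setOf_isDensity.sum_mem (fun i _ => hlam i) hsum
    fun i _ => (h1 i).kronecker (h2 i)

theorem Separable.ptranspose2 {ρ : Matrix (Fin m × Fin n) (Fin m × Fin n) ℂ}
    (hρ : Separable ρ) : Separable (ptranspose2 ρ) := by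
  obtain ⟨k, lam, ρ1, ρ2, hlam, hsum, h1, h2, rfl⟩ := hρ
  refine ⟨k, lam, ρ1, fun i => (ρ2 i)ᵀ, hlam, hsum, h1, fun i => (h2 i).transpose, ?_⟩
  simp only [ptranspose2_sum, ptranspose2_smul, ptranspose2_kronecker]

end PartialTranspose

/-- Peres's necessary condition for separability: the partial transpose of a separable
density matrix is again a density matrix; in particular it is positive semidefinite. -/
theorem stmt9 (m n : ℕ) (ρ : Matrix (Fin m × Fin n) (Fin m × Fin n) ℂ)
    (hρ : IsDensity ρ) (hsep : Separable ρ) :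
    IsDensity (ptranspose2 ρ) ∧ (ptranspose2 ρ).PosSemidef := by
  have hdensity : IsDensity (ptranspose2 ρ) := hsep.ptranspose2.isDensity
  exact ⟨hdensity, hdensity.1⟩
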